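/- Consider, for each integer k, the unordered pair of residues modulo 65024 consisting of (2k(k+1) + 127(2k+1)) mod 65024 and (2k(k+1) − 127(2k+1)) mod 65024. Then the set of all such unordered pairs, as k ranges over the integers, has exactly 4096 elements. -/

import Mathlib

/-- Two integers give the same ordered pair of residues iff they agree modulo `128` and agree
modulo `127` up to the reflection `k ↦ -1 - k`. -/
lemma shimada_ordered_pair_dvd_iff (k l : ℤ) :
    ((65024 : ℤ) ∣ (2 * l * (l + 1) + 127 * (2 * l + 1)) - (2 * k * (k + 1) + 127 * (2 * k + 1)) ∧
      (65024 : ℤ) ∣ (2 * l * (l + 1) - 127 * (2 * l + 1)) - (2 * k * (k + 1) - 127 * (2 * k + 1))) ↔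
    (128 : ℤ) ∣ l - k ∧ ((127 : ℤ) ∣ l - k ∨ (127 : ℤ) ∣ l + k + 1) := by
  have hp : Prime (127 : ℤ) := Int.prime_iff_natAbs_prime.2 (by norm_num)
  rw [← hp.dvd_mul]
  have hsum : (2 * l * (l + 1) + 127 * (2 * l + 1)) - (2 * k * (k + 1) + 127 * (2 * k + 1)) =
      2 * ((l - k) * (l + k + 1)) + 254 * (l - k) := by ring
  have hdiff : (2 * l * (l + 1) - 127 * (2 * l + 1)) - (2 * k * (k + 1) - 127 * (2 * k + 1)) =
      2 * ((l - k) * (l + k + 1)) - 254 * (l - k) := by ring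
  rw [hsum, hdiff]
  constructor
  · rintro ⟨h₁, h₂⟩
    omega
  · rintro ⟨⟨c, hc⟩, h⟩
    have hodd : (l - k) * (l + k + 1) = 128 * c + 256 * (c * (k + 64 * c)) := by
      have hl : l = k + 128 * c := by omega
      subst hl
      ring
    omega

/-- The unordered pair of residues attached to an integer `k`. -/
def shimadaPair (k : ℤ) : Sym2 (ZMod 65024) :=
  s(((2 * k * (k + 1) + 127 * (2 * k + 1) : ℤ) : ZMod 65024),
    ((2 * k * (k + 1) - 127 * (2 * k + 1) : ℤ) : ZMod 65024))

/-- Two integers give the same unordered pair iff they agree modulo `128` and modulo `127`,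
in each case up to the reflection `k ↦ -1 - k`. -/
lemma shimadaPair_eq_iff (k l : ℤ) :
    shimadaPair k = shimadaPair l ↔
      ((128 : ℤ) ∣ l - k ∨ (128 : ℤ) ∣ l + k + 1) ∧
        ((127 : ℤ) ∣ l - k ∨ (127 : ℤ) ∣ l + k + 1) := by
  have h₁ := shimada_ordered_pair_dvd_iff k l
  have h₂ := shimada_ordered_pair_dvd_iff k (-1 - l)
  have hplus : 2 * (-1 - l) * (-1 - l + 1) + 127 * (2 * (-1 - l) + 1) =
      2 * l * (l + 1) - 127 * (2 * l + 1) := by ring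
  have hminus : 2 * (-1 - l) * (-1 - l + 1) - 127 * (2 * (-1 - l) + 1) =
      2 * l * (l + 1) + 127 * (2 * l + 1) := by ring
  rw [hplus, hminus] at h₂
  simp only [shimadaPair, Sym2.eq_iff, ZMod.intCast_eq_intCast_iff_dvd_sub, Nat.cast_ofNat]
  rw [h₁, h₂]
  omega

/-- A complete irredundant system of representatives of the unordered pairs, via the Chinese
remainder theorem. -/
lemma range_shimadaPair :
    Set.range shimadaPair =
      (fun p : ℕ × ℕ => shimadaPair (128 * p.2 - 127 * p.1)) ''
        (Finset.range 64 ×ˢ Finset.range 64 : Finset (ℕ × ℕ)) := by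
  ext x
  constructor
  · rintro ⟨k, rfl⟩
    obtain ⟨a, ha, hka⟩ : ∃ a : ℕ, a < 64 ∧ ((128 : ℤ) ∣ k - a ∨ (128 : ℤ) ∣ k + a + 1) := by
      rcases le_or_gt (k % 128) 63 with h | h
      · exact ⟨(k % 128).toNat, by omega, by omega⟩
      · exact ⟨(127 - k % 128).toNat, by omega, by omega⟩
    obtain ⟨b, hb, hkb⟩ : ∃ b : ℕ, b < 64 ∧ ((127 : ℤ) ∣ k - b ∨ (127 : ℤ) ∣ k + b + 1) := by
      rcases le_or_gt (k % 127) 63 with h | h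
      · exact ⟨(k % 127).toNat, by omega, by omega⟩
      · exact ⟨(126 - k % 127).toNat, by omega, by omega⟩
    refine ⟨(a, b), by simp [ha, hb], ?_⟩
    simp only [shimadaPair_eq_iff]
    constructor
    · clear hkb
      omega
    · clear hka
      omega
  · rintro ⟨p, -, rfl⟩
    exact ⟨_, rfl⟩

lemma injOn_shimadaPair :
    Set.InjOn (fun p : ℕ × ℕ => shimadaPair (128 * p.2 - 127 * p.1))
      (Finset.range 64 ×ˢ Finset.range 64 : Finset (ℕ × ℕ)) := by
  simp only [Set.InjOn, Finset.mem_coe, Finset.mem_product, Finset.mem_range, shimadaPair_eq_iff]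
  rintro ⟨a, b⟩ ⟨ha, hb⟩ ⟨c, d⟩ ⟨hc, hd⟩ ⟨h₁, h₂⟩
  rw [Prod.mk.injEq]
  constructor
  · clear h₂
    omega
  · clear h₁
    omega

/-- The set of unordered pairs
`{(2k(k+1) + 127(2k+1)) mod 65024, (2k(k+1) − 127(2k+1)) mod 65024}`,
as `k` ranges over the integers, has exactly 4096 elements. -/
theorem shimada_proj_count :
    (Set.range fun k : ℤ =>
      (s(((2 * k * (k + 1) + 127 * (2 * k + 1) : ℤ) : ZMod 65024),
         ((2 * k * (k + 1) - 127 * (2 * k + 1) : ℤ) : ZMod 65024)) :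
        Sym2 (ZMod 65024))).ncard = 4096 := by
  change (Set.range shimadaPair).ncard = 4096
  rw [range_shimadaPair, injOn_shimadaPair.ncard_image, Set.ncard_coe_finset,
    Finset.card_product, Finset.card_range]
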